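/- Let Γ be a play-once DG game satisfying the normalization: every non-terminal position v has N⁺(v) ⊄ T and |N⁺(v) ∩ T| ≤ 1. Then Γ has a non-terminal Nash equilibrium (a NE σ with g(σ) = ∞) if and only if the induced subgraph G[W] contains a directed cycle, where S = { v ∈ V∖T : N⁺(v) ∩ T ≠ ∅ and a(v) ≻_{i(v)} ∞ } (a(v) being the unique terminal in N⁺(v) ∩ T) and W is the set of positions reachable from v₀ by a directed path in the induced subgraph G[V∖S]. -/

import Mathlib

/-!
Call a position safe if it lies outside `S`.

If `σ` is a non-terminal equilibrium, its play visits only safe positions: the player of a visited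
position in `S` could move to a terminal preferred to `∞`. The play is thus an infinite walk in
`G[W]`, and by finiteness it repeats a position, which gives a directed cycle
(`cycle_of_nonterminalNE`).

Conversely, let `x` lie on a cycle of `G[W]` and let `C` be the set of positions from which `x` can
be reached in `G[V∖S]`. Then `C` contains the initial position, avoids `S`, and every position of
`C` has a move inside `C`. Let `σ` move inside `C` from positions of `C`, and to any non-terminal
elsewhere, which normalization permits. No move of `σ` enters a terminal, so a deviating player
ends the play only by moving directly to a terminal from his single position; up to that moment the
play is that of `σ`, hence in `C`, so the position is safe and the deviation does not pay
(`nonterminalNE_of_trap`).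
-/

open Classical

/-- A deterministic graphical (DG) game on vertex (position) set `V` with player set `ι`.
`adj` is the move relation of the digraph; terminals are exactly the vertices of
out-degree `0`.  `owner x` is the player controlling position `x` (irrelevant for
terminals), `init` is the initial position, and `pref i x y` means that player `i`
strictly prefers outcome `x` to outcome `y`, where outcomes are encoded as
`Option V`: `some t` for a terminal `t` and `none` for the infinite outcome `∞`. -/
structure DGGame (V : Type*) (ι : Type*) where
  adj : V → V → Prop
  owner : V → ι
  init : V
  pref : ι → Option V → Option V → Prop

namespace DGGame

variable {V ι : Type*} (Γ : DGGame V ι)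

/-- A terminal position: no outgoing moves. -/
def Terminal (x : V) : Prop := ∀ y, ¬ Γ.adj x y

/-- The set of outcomes `A = T ∪ {∞}`. -/
def OutcomeSet : Set (Option V) := {x | x = none ∨ ∃ t, Γ.Terminal t ∧ x = some t}

/-- The preferences of each player form a strict linear order on the outcome set. -/
def PrefOrder : Prop :=
  ∀ i : ι,
    (∀ x ∈ Γ.OutcomeSet, ¬ Γ.pref i x x) ∧
    (∀ x ∈ Γ.OutcomeSet, ∀ y ∈ Γ.OutcomeSet, ∀ z ∈ Γ.OutcomeSet,
        Γ.pref i x y → Γ.pref i y z → Γ.pref i x z) ∧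
    (∀ x ∈ Γ.OutcomeSet, ∀ y ∈ Γ.OutcomeSet, x ≠ y → Γ.pref i x y ∨ Γ.pref i y x)

/-- One step of the play determined by a situation `σ` (stays put at terminals). -/
noncomputable def step (σ : V → V) (x : V) : V :=
  if Γ.Terminal x then x else σ x

/-- The position reached after `n` moves of the play starting at the initial position. -/
noncomputable def iter (σ : V → V) (n : ℕ) : V := (Γ.step σ)^[n] Γ.init

/-- The outcome `g(σ)` of a situation: the terminal at which the play from the initial
position ends, or `none` (i.e. `∞`) if the play is infinite. -/
noncomputable def outcome (σ : V → V) : Option V :=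
  if h : ∃ n, Γ.Terminal (Γ.iter σ n) then some (Γ.iter σ (Nat.find h)) else none

/-- A situation: a choice, for every non-terminal position, of a move from it.
(Values at terminal positions are irrelevant.) -/
def IsSituation (σ : V → V) : Prop := ∀ x, ¬ Γ.Terminal x → Γ.adj x (σ x)

/-- Nash equilibrium in pure stationary strategies: no player `i` can obtain a strictly
better outcome by changing his own moves only. -/
def IsNE (σ : V → V) : Prop :=
  Γ.IsSituation σ ∧
  ∀ (i : ι) (σ' : V → V), Γ.IsSituation σ' →
    (∀ x, Γ.owner x ≠ i → σ' x = σ x) →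
    ¬ Γ.pref i (Γ.outcome σ') (Γ.outcome σ)

/-- A terminal Nash equilibrium: a NE whose outcome is a terminal. -/
def IsTerminalNE (σ : V → V) : Prop := Γ.IsNE σ ∧ ∃ t, Γ.outcome σ = some t

/-- A non-terminal Nash equilibrium: a NE whose outcome is `∞`. -/
def IsNonterminalNE (σ : V → V) : Prop := Γ.IsNE σ ∧ Γ.outcome σ = none

/-- A terminal DG game: every player prefers every terminal outcome to `∞`. -/
def TerminalGame : Prop := ∀ (i : ι) (t : V), Γ.Terminal t → Γ.pref i (some t) none

/-- A play-once DG game: every player controls exactly one position. -/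
def PlayOnce : Prop := ∀ i : ι, {x | ¬ Γ.Terminal x ∧ Γ.owner x = i}.ncard = 1

/-- Reachability by a directed path. -/
def Reaches (x y : V) : Prop := Relation.ReflTransGen Γ.adj x y

end DGGame

namespace DGGame

variable {V ι : Type*}

/-- The set `S`: non-terminal positions `v` having a move to a terminal `a(v)` that the
controlling player prefers to `∞`. -/
def Sset (Γ : DGGame V ι) : Set V :=
  {x | ¬ Γ.Terminal x ∧
    ∃ t, Γ.adj x t ∧ Γ.Terminal t ∧ Γ.pref (Γ.owner x) (some t) none}

/-- The move relation of the induced subgraph `G[V∖S]`. -/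
def adjNS (Γ : DGGame V ι) (x y : V) : Prop :=
  Γ.adj x y ∧ x ∉ Γ.Sset ∧ y ∉ Γ.Sset

/-- The set `W`: positions reachable from the initial position by a directed path in
the induced subgraph `G[V∖S]`. -/
def Wset (Γ : DGGame V ι) : Set V :=
  {x | Γ.init ∉ Γ.Sset ∧ x ∉ Γ.Sset ∧ Relation.ReflTransGen Γ.adjNS Γ.init x}

/-- The move relation of the induced subgraph `G[W]`. -/
def adjW (Γ : DGGame V ι) (x y : V) : Prop :=
  Γ.adj x y ∧ x ∈ Γ.Wset ∧ y ∈ Γ.Wset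

/-- The normalization used for play-once games: every non-terminal position has a
non-terminal out-neighbour (`N⁺(v) ⊄ T`) and at most one terminal out-neighbour. -/
def Normalized (Γ : DGGame V ι) : Prop :=
  ∀ x, ¬ Γ.Terminal x →
    (∃ y, Γ.adj x y ∧ ¬ Γ.Terminal y) ∧ {y | Γ.adj x y ∧ Γ.Terminal y}.ncard ≤ 1

end DGGame

namespace DGGame

variable {V ι : Type*}

lemma iter_succ (Γ : DGGame V ι) (σ : V → V) (n : ℕ) :
    Γ.iter σ (n + 1) = Γ.step σ (Γ.iter σ n) := by
  simp only [iter, Function.iterate_succ_apply']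

lemma iter_succ_of_not_terminal (Γ : DGGame V ι) (σ : V → V) {n : ℕ}
    (h : ¬ Γ.Terminal (Γ.iter σ n)) : Γ.iter σ (n + 1) = σ (Γ.iter σ n) := by
  rw [iter_succ, step, if_neg h]

lemma outcome_eq_none_iff (Γ : DGGame V ι) (σ : V → V) :
    Γ.outcome σ = none ↔ ∀ n, ¬ Γ.Terminal (Γ.iter σ n) := by
  unfold outcome
  split_ifs with h
  · simpa using h
  · simpa using h

lemma outcome_eq_of_terminal_succ (Γ : DGGame V ι) (σ : V → V) (n : ℕ)
    (hn : ∀ k ≤ n, ¬ Γ.Terminal (Γ.iter σ k)) (ht : Γ.Terminal (Γ.iter σ (n + 1))) :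
    Γ.outcome σ = some (Γ.iter σ (n + 1)) := by
  have h : ∃ n, Γ.Terminal (Γ.iter σ n) := ⟨_, ht⟩
  have hf : Nat.find h = n + 1 := by
    rw [Nat.find_eq_iff]
    exact ⟨ht, fun k hk => hn k (by omega)⟩
  rw [outcome, dif_pos h, hf]

/-- In a non-terminal equilibrium no visited position lies in `S`: redirecting the first visit to
such a position to its good terminal would be a profitable deviation. -/
lemma iter_notMem_Sset (Γ : DGGame V ι) {σ : V → V} (h : Γ.IsNonterminalNE σ) (n : ℕ) :
    Γ.iter σ n ∉ Γ.Sset := by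
  obtain ⟨⟨hs, hne⟩, hout⟩ := h
  have hnt := (Γ.outcome_eq_none_iff σ).1 hout
  intro hS
  obtain ⟨-, t, hadj, ht, hp⟩ := hS
  have hex : ∃ m, Γ.iter σ m = Γ.iter σ n := ⟨n, rfl⟩
  obtain ⟨m, hm, hmin⟩ : ∃ m, Γ.iter σ m = Γ.iter σ n ∧ ∀ k < m, Γ.iter σ k ≠ Γ.iter σ n :=
    ⟨Nat.find hex, Nat.find_spec hex, fun k hk => Nat.find_min hex hk⟩
  generalize Γ.iter σ n = v at *
  let σ' : V → V := Function.update σ v t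
  have hsame : ∀ k ≤ m, Γ.iter σ' k = Γ.iter σ k := by
    intro k
    induction k with
    | zero => intro _; rfl
    | succ k ih =>
      intro hk
      have e := ih (by omega)
      rw [iter_succ_of_not_terminal Γ σ' (by rw [e]; exact hnt k),
        iter_succ_of_not_terminal Γ σ (hnt k), e]
      exact Function.update_of_ne (hmin k (by omega)) _ _
  have hlast : Γ.iter σ' (m + 1) = t := by
    rw [iter_succ_of_not_terminal Γ σ' (by rw [hsame m le_rfl]; exact hnt m), hsame m le_rfl, hm]
    exact Function.update_self _ _ _
  have ho : Γ.outcome σ' = some t := by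
    rw [← hlast]
    refine Γ.outcome_eq_of_terminal_succ σ' m (fun k hk => ?_) (by rw [hlast]; exact ht)
    rw [hsame k hk]
    exact hnt k
  refine hne (Γ.owner v) σ' ?_ ?_ (by rw [ho, hout]; exact hp)
  · intro y hy
    by_cases hyv : y = v
    · subst hyv
      simpa [σ'] using hadj
    · simpa [σ', hyv] using hs y hy
  · intro y hy
    have hyv : y ≠ v := fun e => hy (by rw [e])
    simp [σ', hyv]

lemma cycle_of_nonterminalNE [Finite V] (Γ : DGGame V ι) {σ : V → V}
    (h : Γ.IsNonterminalNE σ) : ∃ x, Relation.TransGen Γ.adjW x x := by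
  have hS := Γ.iter_notMem_Sset h
  have hnt := (Γ.outcome_eq_none_iff σ).1 h.2
  have hadj : ∀ n, Γ.adj (Γ.iter σ n) (Γ.iter σ (n + 1)) := fun n => by
    rw [iter_succ_of_not_terminal Γ σ (hnt n)]
    exact h.1.1 _ (hnt n)
  have hW : ∀ n, Γ.iter σ n ∈ Γ.Wset := fun n => by
    refine ⟨hS 0, hS n, ?_⟩
    induction n with
    | zero => exact .refl
    | succ n ih => exact ih.tail ⟨hadj n, hS n, hS (n + 1)⟩
  have hstep : ∀ n, Γ.adjW (Γ.iter σ n) (Γ.iter σ (n + 1)) :=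
    fun n => ⟨hadj n, hW n, hW (n + 1)⟩
  have htrans : ∀ m k, Relation.TransGen Γ.adjW (Γ.iter σ m) (Γ.iter σ (m + k + 1)) := by
    intro m k
    induction k with
    | zero => exact .single (hstep m)
    | succ k ih => exact ih.tail (hstep _)
  obtain ⟨m, n, hmn, heq⟩ :=
    Finite.exists_ne_map_eq_of_infinite (fun n : ℕ => Γ.iter σ n)
  wlog hlt : m < n generalizing m n
  · exact this n m hmn.symm heq.symm (by omega)
  refine ⟨Γ.iter σ m, ?_⟩
  have := htrans m (n - m - 1)
  rw [show m + (n - m - 1) + 1 = n by omega] at this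
  simpa only [heq] using this

/-- A set `C` of positions outside `S` that contains the initial position and from each of whose
positions the play can be kept inside `C` yields a non-terminal equilibrium. -/
lemma nonterminalNE_of_trap (Γ : DGGame V ι) (hpref : Γ.PrefOrder)
    (hpo : Γ.PlayOnce) (hnorm : Γ.Normalized) (C : Set V) (hC0 : Γ.init ∈ C)
    (hCS : ∀ x ∈ C, x ∉ Γ.Sset) (hC : ∀ x ∈ C, ∃ y ∈ C, Γ.adj x y) :
    ∃ σ : V → V, Γ.IsNonterminalNE σ := by
  have hCT : ∀ x ∈ C, ¬ Γ.Terminal x := fun x hx hT =>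
    let ⟨y, _, hy⟩ := hC x hx
    hT y hy
  have hchoice : ∀ x, ∃ y, ¬ Γ.Terminal x →
      Γ.adj x y ∧ ¬ Γ.Terminal y ∧ (x ∈ C → y ∈ C) := by
    intro x
    by_cases hx : x ∈ C
    · obtain ⟨y, hyC, hy⟩ := hC x hx
      exact ⟨y, fun _ => ⟨hy, hCT y hyC, fun _ => hyC⟩⟩
    · by_cases hT : Γ.Terminal x
      · exact ⟨x, fun h => absurd hT h⟩
      · obtain ⟨y, hy, hyT⟩ := (hnorm x hT).1
        exact ⟨y, fun _ => ⟨hy, hyT, fun h => absurd h hx⟩⟩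
  choose σ hσ using hchoice
  have hplay : ∀ n, Γ.iter σ n ∈ C := by
    intro n
    induction n with
    | zero => exact hC0
    | succ n ih =>
      rw [iter_succ_of_not_terminal Γ σ (hCT _ ih)]
      exact (hσ _ (hCT _ ih)).2.2 ih
  have hout : Γ.outcome σ = none :=
    (Γ.outcome_eq_none_iff σ).2 fun n => hCT _ (hplay n)
  refine ⟨σ, ⟨fun x hx => (hσ x hx).1, ?_⟩, hout⟩
  intro i σ' hs' hdev hp
  rw [hout] at hp
  by_cases hinf : ∀ n, ¬ Γ.Terminal (Γ.iter σ' n)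
  · rw [(Γ.outcome_eq_none_iff σ').2 hinf] at hp
    exact (hpref i).1 none (Or.inl rfl) hp
  push Not at hinf
  obtain ⟨N, hN, hmin⟩ : ∃ N, Γ.Terminal (Γ.iter σ' N) ∧ ∀ k < N, ¬ Γ.Terminal (Γ.iter σ' k) :=
    ⟨Nat.find hinf, Nat.find_spec hinf, fun k hk => Nat.find_min hinf hk⟩
  cases N with
  | zero => exact hCT _ hC0 hN
  | succ N =>
    have hy := hmin N (by omega)
    have ht : Γ.iter σ' (N + 1) = σ' (Γ.iter σ' N) := by
      exact Γ.iter_succ_of_not_terminal _ hy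
    -- `σ` never moves to a terminal, so the last move was made by the deviating player.
    have howner : Γ.owner (Γ.iter σ' N) = i := by
      by_contra hne
      rw [ht, hdev _ hne] at hN
      exact (hσ _ hy).2.1 hN
    have hmem : ∀ k ≤ N, Γ.iter σ' k ∈ C := by
      intro k
      induction k with
      | zero => intro _; exact hC0
      | succ k ih =>
        intro hk
        have hkC := ih (by omega)
        have hkT := hCT _ hkC
        have hsucc : Γ.iter σ' (k + 1) = σ' (Γ.iter σ' k) := by
          exact Γ.iter_succ_of_not_terminal _ hkT
        -- The player's only position cannot come up earlier: the play would have ended there.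
        have hne : Γ.owner (Γ.iter σ' k) ≠ i := by
          intro he
          obtain ⟨a, ha⟩ := Set.ncard_eq_one.1 (hpo i)
          have h1 : Γ.iter σ' k = a := ha.subset ⟨hkT, he⟩
          have h2 : Γ.iter σ' N = a := ha.subset ⟨hy, howner⟩
          refine hmin (k + 1) (by omega) ?_
          rw [hsucc, h1, ← h2, ← ht]
          exact hN
        rw [hsucc, hdev _ hne]
        exact (hσ _ hkT).2.2 hkC
    rw [Γ.outcome_eq_of_terminal_succ σ' N (fun k hk => hmin k (by omega)) hN] at hp
    refine hCS _ (hmem N le_rfl) ⟨hy, _, ?_, hN, by rw [howner]; exact hp⟩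
    rw [ht]
    exact hs' _ hy

end DGGame

/-- A normalized play-once DG game has a non-terminal Nash equilibrium if and only if
the induced subgraph `G[W]` contains a directed cycle. -/
theorem stmt12 {V ι : Type*} [Finite V] (Γ : DGGame V ι)
    (hinit : ¬ Γ.Terminal Γ.init) (hpref : Γ.PrefOrder)
    (hpo : Γ.PlayOnce) (hnorm : Γ.Normalized) :
    (∃ σ : V → V, Γ.IsNonterminalNE σ) ↔ ∃ x, Relation.TransGen Γ.adjW x x := by
  constructor
  · rintro ⟨σ, hσ⟩
    exact Γ.cycle_of_nonterminalNE hσ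
  · rintro ⟨x, hx⟩
    have hWx : x ∈ Γ.Wset := by
      obtain ⟨y, hy, -⟩ := Relation.TransGen.head'_iff.1 hx
      exact hy.2.1
    have hx' : Relation.TransGen Γ.adjNS x x :=
      Relation.TransGen.mono (fun a b h => ⟨h.1, h.2.1.2.1, h.2.2.2.1⟩) _ _ hx
    -- Every position from which `x` can be reached in `G[V∖S]` has a move to another such one.
    have key : ∀ y, Relation.ReflTransGen Γ.adjNS y x →
        ∃ z, Relation.ReflTransGen Γ.adjNS z x ∧ Γ.adjNS y z := by
      intro y hy
      have hyx : Relation.TransGen Γ.adjNS y x := Relation.TransGen.trans_right hy hx'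
      obtain ⟨z, hz, hzx⟩ := Relation.TransGen.head'_iff.1 hyx
      exact ⟨z, hzx, hz⟩
    refine Γ.nonterminalNE_of_trap hpref hpo hnorm {y | Relation.ReflTransGen Γ.adjNS y x}
      hWx.2.2 (fun y hy => ?_) (fun y hy => ?_)
    · obtain ⟨z, -, hz⟩ := key y hy
      exact hz.2.1
    · obtain ⟨z, hzx, hz⟩ := key y hy
      exact ⟨z, hzx, hz.1⟩
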